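/- Monotonicity of the aliased-noise differential entropy in the noise level: for every α > 0 and all σ₁, σ₂ with 0 < σ₁ ≤ σ₂, one has h(α,σ₁) ≤ h(α,σ₂); in particular the quantity ε₁ = h(α,σ_e) − h(α,σ_b) appearing in the secrecy-rate computation is nonnegative whenever σ_b ≤ σ_e. -/

import Mathlib

open MeasureTheory Real Filter

/-- The Gaussian density with zero mean and standard deviation `σ`. -/
noncomputable def gaussDen (σ x : ℝ) : ℝ :=
  (Real.sqrt (2 * Real.pi * σ ^ 2))⁻¹ * Real.exp (-x ^ 2 / (2 * σ ^ 2))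

/-- The `αℤ`-aliased Gaussian density `f_{σ,α}(x) = Σ_{k∈ℤ} g_σ(x − kα)`. -/
noncomputable def aliasedDen (σ α x : ℝ) : ℝ := ∑' k : ℤ, gaussDen σ (x - (k : ℝ) * α)

/-- The differential entropy `h(α,σ)` of the `αℤ`-aliased Gaussian noise
on the fundamental region `[0, α)`. -/
noncomputable def aliasedEnt (α σ : ℝ) : ℝ :=
  -∫ x in Set.Ico (0 : ℝ) α, aliasedDen σ α x * Real.log (aliasedDen σ α x)

open ProbabilityTheory
open scoped NNReal

/-!
Adding independent Gaussian noise of variance `v` turns `f_{σ,α}` into `f_{σ',α}` with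
`σ'² = σ² + v`, so the noisier density is an average of translates of the less noisy one. Jensen's
inequality for the convex function `t ↦ t log t` bounds the noisier entropy integrand pointwise by
the same average of translates of the less noisy one, and translating an `α`-periodic function does
not change its integral over `[0, α)`.
-/

section PeriodicConvolution

variable {E : Type*} [NormedAddCommGroup E] {f : ℝ → E} {T : ℝ}

lemma integrable_periodic_comp {X : Type*} [TopologicalSpace X] [SecondCountableTopology X]
    [MeasurableSpace X] [OpensMeasurableSpace X] {ν : Measure X} [IsFiniteMeasure ν]
    (hf : Continuous f) (hper : Function.Periodic f T) (hT : T ≠ 0) {g : X → ℝ}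
    (hg : Continuous g) : Integrable (fun x => f (g x)) ν := by
  obtain ⟨C, hC⟩ := (hper.isBounded_of_continuous hT hf).exists_norm_le
  exact .of_bound (hf.comp hg).aestronglyMeasurable C (ae_of_all _ fun x => hC _ ⟨g x, rfl⟩)

variable [NormedSpace ℝ E] {μ : Measure ℝ}

lemma continuous_integral_periodic_sub [IsFiniteMeasure μ] (hf : Continuous f)
    (hper : Function.Periodic f T) (hT : T ≠ 0) : Continuous fun x => ∫ y, f (x - y) ∂μ := by
  obtain ⟨C, hC⟩ := (hper.isBounded_of_continuous hT hf).exists_norm_le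
  exact continuous_of_dominated (bound := fun _ => C)
    (fun x => (hf.comp (continuous_sub_left x)).aestronglyMeasurable)
    (fun x => ae_of_all _ fun y => hC _ ⟨x - y, rfl⟩) (integrable_const C)
    (ae_of_all _ fun y => hf.comp (continuous_sub_right y))

lemma intervalIntegral_periodic_comp_sub (hper : Function.Periodic f T) (y : ℝ) :
    ∫ x in 0..T, f (x - y) = ∫ x in 0..T, f x := by
  rw [intervalIntegral.integral_comp_sub_right, sub_eq_neg_add T y, zero_sub,
    hper.intervalIntegral_add_eq (-y) 0, zero_add]

lemma intervalIntegral_integral_periodic_sub [IsProbabilityMeasure μ] [CompleteSpace E]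
    (hf : Continuous f) (hper : Function.Periodic f T) (hT : T ≠ 0) :
    ∫ x in 0..T, ∫ y, f (x - y) ∂μ = ∫ x in 0..T, f x := by
  have : IsFiniteMeasure (volume.restrict (Set.uIoc 0 T)) :=
    isFiniteMeasure_restrict_Ioc (min 0 T) (max 0 T)
  have hint : Integrable (Function.uncurry fun x y => f (x - y))
      ((volume.restrict (Set.uIoc 0 T)).prod μ) :=
    integrable_periodic_comp hf hper hT (g := fun p : ℝ × ℝ => p.1 - p.2) continuous_sub
  simp only [intervalIntegral_integral_swap hint, intervalIntegral_periodic_comp_sub hper,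
    integral_const, probReal_univ, one_smul]

theorem intervalIntegral_convexOn_integral_periodic_sub_le [IsProbabilityMeasure μ]
    [CompleteSpace E] {s : Set E} {φ : E → ℝ} (hφ : ConvexOn ℝ s φ) (hφc : ContinuousOn φ s)
    (hs : IsClosed s) (hf : Continuous f) (hfs : ∀ x, f x ∈ s) (hper : Function.Periodic f T)
    (hT : 0 < T) : ∫ x in 0..T, φ (∫ y, f (x - y) ∂μ) ≤ ∫ x in 0..T, φ (f x) := by
  have hφf : Continuous (φ ∘ f) := hφc.comp_continuous hf hfs
  have hφper : Function.Periodic (φ ∘ f) T := hper.comp φ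
  have hfi (x : ℝ) : Integrable (fun y => f (x - y)) μ :=
    integrable_periodic_comp hf hper hT.ne' (continuous_sub_left x)
  have jensen (x : ℝ) : φ (∫ y, f (x - y) ∂μ) ≤ ∫ y, (φ ∘ f) (x - y) ∂μ :=
    hφ.map_integral_le hφc hs (ae_of_all _ fun y => hfs (x - y)) (hfi x)
      (integrable_periodic_comp hφf hφper hT.ne' (continuous_sub_left x))
  have hleft : Continuous fun x => φ (∫ y, f (x - y) ∂μ) :=
    hφc.comp_continuous (continuous_integral_periodic_sub hf hper hT.ne') fun x =>
      hφ.1.integral_mem hs (ae_of_all _ fun y => hfs (x - y)) (hfi x)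
  have hright : Continuous fun x => ∫ y, (φ ∘ f) (x - y) ∂μ :=
    continuous_integral_periodic_sub hφf hφper hT.ne'
  calc ∫ x in 0..T, φ (∫ y, f (x - y) ∂μ)
      ≤ ∫ x in 0..T, ∫ y, (φ ∘ f) (x - y) ∂μ :=
        intervalIntegral.integral_mono hT.le (hleft.intervalIntegrable 0 T)
          (hright.intervalIntegrable 0 T) jensen
    _ = ∫ x in 0..T, φ (f x) := intervalIntegral_integral_periodic_sub hφf hφper hT.ne'

end PeriodicConvolution

section GaussianConvolution

variable {v w : ℝ≥0}

-- Completing the square in `y`.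
lemma gaussianPDFReal_mul_gaussianPDFReal_sub (m n : ℝ) (hv : v ≠ 0) (hw : w ≠ 0) (x y : ℝ) :
    gaussianPDFReal m v y * gaussianPDFReal n w (x - y) =
      gaussianPDFReal (m + n) (v + w) x *
        gaussianPDFReal (m + (x - (m + n)) * (v / (v + w))) (v * w / (v + w)) y := by
  have hexp : -(y - m) ^ 2 / (2 * v) + -(x - y - n) ^ 2 / (2 * w) =
      -(x - (m + n)) ^ 2 / (2 * (v + w)) +
        -(y - (m + (x - (m + n)) * (v / (v + w)))) ^ 2 / (2 * (v * w / (v + w))) := by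
    field_simp
    ring
  have hsqrt : √(2 * π * v) * √(2 * π * w) =
      √(2 * π * (v + w)) * √(2 * π * (v * w / (v + w))) := by
    rw [← Real.sqrt_mul (by positivity), ← Real.sqrt_mul (by positivity)]
    congr 1
    field_simp
  simp only [gaussianPDFReal, NNReal.coe_add, NNReal.coe_div, NNReal.coe_mul]
  rw [mul_mul_mul_comm, ← mul_inv, ← Real.exp_add, hexp, hsqrt, Real.exp_add, mul_inv,
    mul_mul_mul_comm]

lemma integral_gaussianPDFReal_sub_gaussianReal (m n : ℝ) (v : ℝ≥0) (hw : w ≠ 0) (x : ℝ) :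
    ∫ y, gaussianPDFReal n w (x - y) ∂gaussianReal m v = gaussianPDFReal (m + n) (v + w) x := by
  obtain rfl | hv := eq_or_ne v 0
  · simp [gaussianPDFReal_sub, add_comm, gaussianReal_zero_var]
  have hvar : v * w / (v + w) ≠ 0 := by positivity
  simp only [integral_gaussianReal_eq_integral_smul hv, smul_eq_mul,
    gaussianPDFReal_mul_gaussianPDFReal_sub m n hv hw, integral_const_mul,
    integral_gaussianPDFReal_eq_one _ hvar, mul_one]

end GaussianConvolution

section GaussDen

variable {σ : ℝ}

lemma gaussDen_eq_gaussianPDFReal (σ x : ℝ) :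
    gaussDen σ x = gaussianPDFReal 0 (σ ^ 2).toNNReal x := by
  simp [gaussDen, gaussianPDFReal, Real.coe_toNNReal _ (sq_nonneg σ)]

lemma gaussDen_nonneg (σ x : ℝ) : 0 ≤ gaussDen σ x := by
  unfold gaussDen
  positivity

lemma continuous_gaussDen (σ : ℝ) : Continuous (gaussDen σ) := by
  unfold gaussDen
  fun_prop

lemma gaussDen_eq_gaussDen_zero_mul_exp (σ x : ℝ) :
    gaussDen σ x = gaussDen σ 0 * rexp (-x ^ 2 / (2 * σ ^ 2)) := by
  simp [gaussDen]

lemma gaussDen_le_gaussDen_zero (σ x : ℝ) : gaussDen σ x ≤ gaussDen σ 0 := by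
  rw [gaussDen_eq_gaussDen_zero_mul_exp]
  refine mul_le_of_le_one_right (gaussDen_nonneg σ 0) (Real.exp_le_one_iff.2 ?_)
  exact div_nonpos_of_nonpos_of_nonneg (neg_nonpos.2 (sq_nonneg x)) (by positivity)

lemma gaussDen_sub_le (σ x y : ℝ) :
    gaussDen σ (x - y) ≤
      gaussDen σ 0 * (rexp (x ^ 2 / (2 * σ ^ 2)) * rexp (-(y ^ 2 / 2) / (2 * σ ^ 2))) := by
  have hsq : -(x - y) ^ 2 ≤ x ^ 2 + -(y ^ 2 / 2) := by nlinarith [sq_nonneg (2 * x - y)]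
  rw [gaussDen_eq_gaussDen_zero_mul_exp σ (x - y), ← Real.exp_add, ← add_div]
  gcongr
  exact gaussDen_nonneg σ 0

lemma integral_gaussDen_sub_gaussianReal (hσ : σ ≠ 0) (v : ℝ≥0) (x : ℝ) :
    ∫ y, gaussDen σ (x - y) ∂gaussianReal 0 v = gaussDen √(σ ^ 2 + v) x := by
  have hvar : (σ ^ 2).toNNReal ≠ 0 := (Real.toNNReal_pos.2 (by positivity)).ne'
  simp only [gaussDen_eq_gaussianPDFReal, integral_gaussianPDFReal_sub_gaussianReal _ _ v hvar]
  rw [Real.sq_sqrt (by positivity), Real.toNNReal_add (sq_nonneg σ) v.coe_nonneg,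
    Real.toNNReal_coe, add_zero, add_comm v]

end GaussDen

section AliasedDen

variable {σ α : ℝ}

lemma summable_exp_neg_mul_int_sq {c : ℝ} (hc : 0 < c) :
    Summable fun k : ℤ => rexp (-c * (k : ℝ) ^ 2) := by
  refine (summable_pow_mul_jacobiTheta₂_term_bound 0 (div_pos hc Real.pi_pos) 0).congr fun k => ?_
  field_simp
  simp

lemma exists_summable_gaussDen_sub_le (hσ : σ ≠ 0) (hα : α ≠ 0) (R : ℝ) :
    ∃ u : ℤ → ℝ, Summable u ∧ ∀ (k : ℤ) (x : ℝ), |x| ≤ R → gaussDen σ (x - k * α) ≤ u k := by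
  have hc : 0 < α ^ 2 / (4 * σ ^ 2) := by positivity
  refine ⟨_, ((summable_exp_neg_mul_int_sq hc).mul_left (rexp (R ^ 2 / (2 * σ ^ 2)))).mul_left
    (gaussDen σ 0), fun k x hx => (gaussDen_sub_le σ x (k * α)).trans ?_⟩
  have hxR : x ^ 2 ≤ R ^ 2 := sq_le_sq' (neg_le_of_abs_le hx) (le_of_abs_le hx)
  have hexp : -((k * α) ^ 2 / 2) / (2 * σ ^ 2) = -(α ^ 2 / (4 * σ ^ 2)) * (k : ℝ) ^ 2 := by ring
  rw [hexp]
  gcongr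
  exact gaussDen_nonneg σ 0

lemma summable_gaussDen_sub (hσ : σ ≠ 0) (hα : α ≠ 0) (x : ℝ) :
    Summable fun k : ℤ => gaussDen σ (x - k * α) := by
  obtain ⟨u, hu, hle⟩ := exists_summable_gaussDen_sub_le hσ hα |x|
  exact hu.of_nonneg_of_le (fun k => gaussDen_nonneg _ _) fun k => hle k x le_rfl

lemma aliasedDen_nonneg (σ α x : ℝ) : 0 ≤ aliasedDen σ α x :=
  tsum_nonneg fun _ => gaussDen_nonneg _ _

lemma periodic_aliasedDen (σ α : ℝ) : Function.Periodic (aliasedDen σ α) α := by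
  intro x
  unfold aliasedDen
  rw [← (Equiv.addRight (1 : ℤ)).tsum_eq]
  refine tsum_congr fun k => congrArg (gaussDen σ) ?_
  rw [Equiv.coe_addRight]
  push_cast
  ring

lemma continuous_aliasedDen (hσ : σ ≠ 0) (hα : α ≠ 0) : Continuous (aliasedDen σ α) := by
  refine continuous_iff_continuousAt.2 fun x => ?_
  obtain ⟨u, hu, hle⟩ := exists_summable_gaussDen_sub_le hσ hα (|x| + 1)
  have hcont : ContinuousOn (aliasedDen σ α) {z | |z| < |x| + 1} :=
    continuousOn_tsum (fun k => ((continuous_gaussDen σ).comp (by fun_prop)).continuousOn) hu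
      fun k z hz => (Real.norm_of_nonneg (gaussDen_nonneg _ _)).trans_le (hle k z hz.le)
  exact hcont.continuousAt ((isOpen_lt continuous_abs continuous_const).mem_nhds (lt_add_one |x|))

lemma integral_aliasedDen_sub_gaussianReal (hσ : σ ≠ 0) (hα : α ≠ 0) (v : ℝ≥0) (x : ℝ) :
    ∫ y, aliasedDen σ α (x - y) ∂gaussianReal 0 v = aliasedDen √(σ ^ 2 + v) α x := by
  have hterm (k : ℤ) :
      ∫ y, gaussDen σ (x - y - k * α) ∂gaussianReal 0 v = gaussDen √(σ ^ 2 + v) (x - k * α) := by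
    simp only [sub_right_comm x _ (k * α), integral_gaussDen_sub_gaussianReal hσ]
  have hint (k : ℤ) : Integrable (fun y => gaussDen σ (x - y - k * α)) (gaussianReal 0 v) :=
    .of_bound ((continuous_gaussDen σ).comp (by fun_prop)).aestronglyMeasurable (gaussDen σ 0)
      (ae_of_all _ fun y =>
        (Real.norm_of_nonneg (gaussDen_nonneg _ _)).trans_le (gaussDen_le_gaussDen_zero _ _))
  unfold aliasedDen
  rw [← integral_tsum_of_summable_integral_norm hint]
  · exact tsum_congr hterm
  · simp only [Real.norm_of_nonneg (gaussDen_nonneg _ _), hterm]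
    exact summable_gaussDen_sub (by positivity) hα x

end AliasedDen

lemma aliasedEnt_eq_neg_intervalIntegral {α : ℝ} (hα : 0 ≤ α) (σ : ℝ) :
    aliasedEnt α σ = -∫ x in 0..α, aliasedDen σ α x * Real.log (aliasedDen σ α x) := by
  rw [aliasedEnt, integral_Ico_eq_integral_Ioc, intervalIntegral.integral_of_le hα]

lemma aliasedEnt_le_aliasedEnt_sqrt_sq_add {α σ : ℝ} (hα : 0 < α) (hσ : σ ≠ 0) (v : ℝ≥0) :
    aliasedEnt α σ ≤ aliasedEnt α √(σ ^ 2 + v) := by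
  simp only [aliasedEnt_eq_neg_intervalIntegral hα.le, neg_le_neg_iff,
    ← integral_aliasedDen_sub_gaussianReal hσ hα.ne']
  exact intervalIntegral_convexOn_integral_periodic_sub_le Real.convexOn_mul_log
    Real.continuous_mul_log.continuousOn isClosed_Ici (continuous_aliasedDen hσ hα.ne')
    (aliasedDen_nonneg σ α) (periodic_aliasedDen σ α) hα

/-- monotonicity of the aliased-noise differential entropy in the noise level:
`h(α,σ₁) ≤ h(α,σ₂)` for `0 < σ₁ ≤ σ₂`; in particular `ε₁ = h(α,σ_e) − h(α,σ_b) ≥ 0`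
whenever `σ_b ≤ σ_e`. -/
theorem aliasedEnt_mono_in_sigma (α σ₁ σ₂ : ℝ) (hα : 0 < α) (hσ₁ : 0 < σ₁)
    (h12 : σ₁ ≤ σ₂) : aliasedEnt α σ₁ ≤ aliasedEnt α σ₂ := by
  have hsq : σ₁ ^ 2 ≤ σ₂ ^ 2 := pow_le_pow_left₀ hσ₁.le h12 2
  obtain ⟨v, hv⟩ : ∃ v : ℝ≥0, (v : ℝ) = σ₂ ^ 2 - σ₁ ^ 2 := ⟨⟨_, sub_nonneg.2 hsq⟩, rfl⟩
  have hσ₂ : √(σ₁ ^ 2 + v) = σ₂ := by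
    rw [hv, add_sub_cancel, Real.sqrt_sq (hσ₁.le.trans h12)]
  exact hσ₂ ▸ aliasedEnt_le_aliasedEnt_sqrt_sq_add hα hσ₁.ne' v
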